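/- arXiv:2107.04570 — 2 statements merged into one kernel-verified Lean document; each statement's English description precedes it below -/
import Mathlib

section
/- Let Σ ∈ ℝ^{n×n} be positive definite and let f : ℝⁿ → ℝ^K be measurable with each component f^i taking values in [0,1]. Define g_Σ^i(x) = E_{ε ~ N(0,Σ)}[f^i(x + ε)] and assume 0 < g_Σ^i(x) < 1 for all i and all x. Fix x ∈ ℝⁿ and let c_A be an index maximizing g_Σ^i(x) over i. Then for every δ ∈ ℝⁿ satisfying √(δᵀΣ⁻¹δ) ≤ (1/2) · (Φ⁻¹(g_Σ^{c_A}(x)) − Φ⁻¹(max_{c ≠ c_A} g_Σ^c(x))), one has g_Σ^{c_A}(x + δ) ≥ g_Σ^c(x + δ) for every c ≠ c_A. -/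
open MeasureTheory Matrix

/-- Density of the centered Gaussian `N(0, Σ)` on ℝⁿ (w.r.t. Lebesgue measure). -/
noncomputable def gaussDensity (n : ℕ) (Sig : Matrix (Fin n) (Fin n) ℝ)
    (ε : Fin n → ℝ) : ℝ :=
  (Real.sqrt ((2 * Real.pi) ^ n * Sig.det))⁻¹ * Real.exp (-(ε ⬝ᵥ (Sig⁻¹ *ᵥ ε)) / 2)

/-- Standard Gaussian cumulative distribution function Φ on ℝ. -/
noncomputable def stdGaussianCDF (x : ℝ) : ℝ :=
  (ProbabilityTheory.gaussianReal 0 1 (Set.Iic x)).toReal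

open ProbabilityTheory

lemma gd_integral (n : ℕ) (Sig : Matrix (Fin n) (Fin n) ℝ) (hSig : Sig.PosDef) :
    ∫ ε, gaussDensity n Sig ε = 1 := by
  obtain ⟨B, hB⟩ : ∃ B : Matrix (Fin n) (Fin n) ℝ, Sig⁻¹ = Bᵀ * B := by
    open scoped MatrixOrder Matrix.Norms.L2Operator in
    obtain ⟨B, hB⟩ := CStarAlgebra.nonneg_iff_eq_star_mul_self.mp hSig.inv.posSemidef.nonneg
    refine ⟨B, ?_⟩
    rw [hB, star_eq_conjTranspose, conjTranspose_eq_transpose_of_trivial]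
  have hdS : 0 < Sig.det := hSig.det_pos
  have hdet : Sig.det⁻¹ = B.det ^ 2 := by
    have h := congrArg Matrix.det hB
    rw [Matrix.det_nonsing_inv, Matrix.det_mul, Matrix.det_transpose, Ring.inverse_eq_inv'] at h
    rw [h]; ring
  have hdB : B.det ≠ 0 := by
    intro h
    rw [h] at hdet
    have : Sig.det⁻¹ ≠ 0 := inv_ne_zero hdS.ne'
    simp at hdet
    exact hdS.ne' hdet
  have hq : ∀ ε : Fin n → ℝ, Real.exp (-(ε ⬝ᵥ (Sig⁻¹ *ᵥ ε)) / 2)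
      = (fun z : Fin n → ℝ => ∏ i, Real.exp (-(1/2) * (z i)^2)) (Matrix.toLin' B ε) := by
    intro ε
    simp only
    rw [← Real.exp_sum, hB, ← Matrix.mulVec_mulVec, Matrix.dotProduct_mulVec,
      Matrix.vecMul_transpose, ← Finset.mul_sum, Matrix.toLin'_apply]
    congr 1
    simp only [dotProduct, pow_two]
    ring
  unfold gaussDensity
  rw [integral_const_mul]
  simp_rw [hq]
  have hm : Measurable (Matrix.toLin' B) := 
    (LinearMap.continuous_of_finiteDimensional _).measurable
  rw [← integral_map (f := fun z : Fin n → ℝ => ∏ i, Real.exp (-(1/2) * (z i)^2))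
    (μ := volume) hm.aemeasurable
    (Continuous.aestronglyMeasurable (by fun_prop)),
    Real.map_matrix_volume_pi_eq_smul_volume_pi hdB, integral_smul_measure,
    integral_fintype_prod_volume_eq_prod (fun (_ : Fin n) (z:ℝ) => Real.exp (-(1/2) * z^2)),
    integral_gaussian]
  have e1 : Sig.det = (B.det⁻¹)^2 := by rw [inv_pow, ← hdet, inv_inv]
  rw [e1, Real.sqrt_mul (by positivity), Real.sqrt_sq_eq_abs, ENNReal.toReal_ofReal (abs_nonneg _)]
  simp only [Finset.prod_const, Finset.card_univ, Fintype.card_fin, smul_eq_mul]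
  have e2 : √((2 * Real.pi) ^ n) = √(Real.pi / (1/2)) ^ n := by
    rw [Real.sqrt_eq_iff_mul_self_eq (by positivity) (by positivity), ← mul_pow,
      Real.mul_self_sqrt (by positivity)]
    congr 1; ring
  rw [e2]
  have : |B.det⁻¹| ≠ 0 := abs_ne_zero.mpr (inv_ne_zero hdB)
  have : √(Real.pi / (1/2)) ^ n ≠ 0 := by positivity
  field_simp

lemma gd_integrable (n : ℕ) (Sig : Matrix (Fin n) (Fin n) ℝ) (hSig : Sig.PosDef) :
    Integrable (gaussDensity n Sig) := by
  by_contra h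
  have := gd_integral n Sig hSig
  rw [integral_undef h] at this
  norm_num at this

lemma gd_nonneg (n : ℕ) (Sig : Matrix (Fin n) (Fin n) ℝ) (ε : Fin n → ℝ) :
    0 ≤ gaussDensity n Sig ε := by
  unfold gaussDensity; positivity

lemma gd_cont (n : ℕ) (Sig : Matrix (Fin n) (Fin n) ℝ) :
    Continuous (gaussDensity n Sig) := by
  unfold gaussDensity; fun_prop

lemma gd_shift (n : ℕ) (Sig : Matrix (Fin n) (Fin n) ℝ) (hSig : Sig.PosDef)
    (δ ε : Fin n → ℝ) (s : ℝ) :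
    gaussDensity n Sig (ε - s • δ) = gaussDensity n Sig ε *
      Real.exp (s * (δ ⬝ᵥ (Sig⁻¹ *ᵥ ε)) - s^2 / 2 * (δ ⬝ᵥ (Sig⁻¹ *ᵥ δ))) := by
  unfold gaussDensity
  rw [mul_assoc, ← Real.exp_add]
  congr 2
  have hs : ε ⬝ᵥ (Sig⁻¹ *ᵥ δ) = δ ⬝ᵥ (Sig⁻¹ *ᵥ ε) := by
    have ht : (Sig⁻¹)ᵀ = Sig⁻¹ := by
      have := hSig.inv.isHermitian.eq
      rwa [conjTranspose_eq_transpose_of_trivial] at this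
    rw [Matrix.dotProduct_mulVec, ← Matrix.mulVec_transpose, ht, dotProduct_comm]
  simp only [Matrix.mulVec_sub, Matrix.mulVec_smul, dotProduct_sub, sub_dotProduct,
    smul_dotProduct, dotProduct_smul, smul_eq_mul, hs]
  ring

/-- The Gaussian measure with density `gaussDensity`. -/
noncomputable def gdMeasure (n : ℕ) (Sig : Matrix (Fin n) (Fin n) ℝ) : Measure (Fin n → ℝ) :=
  volume.withDensity (fun ε => ENNReal.ofReal (gaussDensity n Sig ε))

lemma gdMeasure_integral (n : ℕ) (Sig : Matrix (Fin n) (Fin n) ℝ) (h : (Fin n → ℝ) → ℝ) :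
    ∫ ε, h ε ∂(gdMeasure n Sig) = ∫ ε, h ε * gaussDensity n Sig ε := by
  unfold gdMeasure
  rw [integral_withDensity_eq_integral_toReal_smul
    (by have := (gd_cont n Sig).measurable; fun_prop) (by simp)]
  simp only [ENNReal.toReal_ofReal (gd_nonneg n Sig _), smul_eq_mul, mul_comm]

lemma gdMeasure_prob (n : ℕ) (Sig : Matrix (Fin n) (Fin n) ℝ) (hSig : Sig.PosDef) :
    IsProbabilityMeasure (gdMeasure n Sig) := by
  constructor
  unfold gdMeasure
  rw [withDensity_apply _ MeasurableSet.univ, setLIntegral_univ,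
    ← ofReal_integral_eq_lintegral_ofReal (gd_integrable n Sig hSig)
      (ae_of_all _ (gd_nonneg n Sig)), gd_integral n Sig hSig, ENNReal.ofReal_one]

lemma gd_law (n : ℕ) (Sig : Matrix (Fin n) (Fin n) ℝ) (hSig : Sig.PosDef)
    (δ : Fin n → ℝ) (r : ℝ) (hr : 0 < r) (hr2 : δ ⬝ᵥ (Sig⁻¹ *ᵥ δ) = r^2) :
    (gdMeasure n Sig).map (fun ε => -(δ ⬝ᵥ (Sig⁻¹ *ᵥ ε)) / r) = gaussianReal 0 1 := by
  have := gdMeasure_prob n Sig hSig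
  have hm : Measurable (fun ε : Fin n → ℝ => -(δ ⬝ᵥ (Sig⁻¹ *ᵥ ε)) / r) :=
    Continuous.measurable (by fun_prop)
  have hmgf : mgf (fun ε : Fin n → ℝ => -(δ ⬝ᵥ (Sig⁻¹ *ᵥ ε)) / r) (gdMeasure n Sig)
      = mgf id (gaussianReal 0 1) := by
    rw [mgf_id_gaussianReal]
    ext t
    rw [mgf, gdMeasure_integral]
    have : ∀ ε, Real.exp (t * (-(δ ⬝ᵥ (Sig⁻¹ *ᵥ ε)) / r)) * gaussDensity n Sig ε
        = Real.exp (t^2/2) * gaussDensity n Sig (ε - (-t/r) • δ) := by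
      intro ε
      rw [gd_shift n Sig hSig, hr2, mul_comm, mul_left_comm, ← Real.exp_add]
      congr 2
      field_simp
      ring
    simp_rw [this]
    rw [integral_const_mul, integral_sub_right_eq_self (gaussDensity n Sig), gd_integral n Sig hSig]
    simp
  have hset : integrableExpSet id (gaussianReal 0 1) = Set.univ := by
    ext t
    simp only [Set.mem_univ, iff_true]
    exact integrable_exp_mul_gaussianReal t
  have hc := eqOn_complexMGF_of_mgf hmgf
  rw [integrableExpSet_eq_of_mgf hmgf, hset] at hc
  have := Measure.ext_of_complexMGF_eq hm.aemeasurable aemeasurable_id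
    (funext fun z => hc (by simp) : complexMGF _ (gdMeasure n Sig) = complexMGF id (gaussianReal 0 1))
  simpa using this

lemma gd_halfspace (n : ℕ) (Sig : Matrix (Fin n) (Fin n) ℝ) (hSig : Sig.PosDef)
    (δ : Fin n → ℝ) (r : ℝ) (hr : 0 < r) (hr2 : δ ⬝ᵥ (Sig⁻¹ *ᵥ δ) = r^2) (a : ℝ) :
    ∫ ε, (Set.indicator {ε | -(δ ⬝ᵥ (Sig⁻¹ *ᵥ ε)) / r ≤ a} (fun _ => (1:ℝ)) ε)
      * gaussDensity n Sig ε = stdGaussianCDF a := by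
  have hm : Measurable (fun ε : Fin n → ℝ => -(δ ⬝ᵥ (Sig⁻¹ *ᵥ ε)) / r) :=
    Continuous.measurable (by fun_prop)
  rw [← gdMeasure_integral, integral_indicator_const _ (measurableSet_le hm measurable_const),
    stdGaussianCDF, ← gd_law n Sig hSig δ r hr hr2, Measure.map_apply hm measurableSet_Iic]
  simp [measureReal_def]
  rfl

lemma bdd_mul_gd (n : ℕ) (Sig : Matrix (Fin n) (Fin n) ℝ) (hSig : Sig.PosDef)
    (h : (Fin n → ℝ) → ℝ) (hm : Measurable h) (h01 : ∀ v, h v ∈ Set.Icc (0:ℝ) 1) :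
    Integrable (fun ε => h ε * gaussDensity n Sig ε) := by
  refine (gd_integrable n Sig hSig).bdd_mul (c := 1) hm.aestronglyMeasurable (ae_of_all _ fun v => ?_)
  rw [Real.norm_eq_abs, abs_of_nonneg (h01 v).1]
  exact (h01 v).2

lemma gd_np (n : ℕ) (Sig : Matrix (Fin n) (Fin n) ℝ) (hSig : Sig.PosDef)
    (δ : Fin n → ℝ) (r : ℝ) (hr : 0 < r) (hr2 : δ ⬝ᵥ (Sig⁻¹ *ᵥ δ) = r^2) (a : ℝ)
    (h : (Fin n → ℝ) → ℝ) (hm : Measurable h) (h01 : ∀ v, h v ∈ Set.Icc (0:ℝ) 1)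
    (ha : ∫ ε, h ε * gaussDensity n Sig ε = stdGaussianCDF a) :
    ∫ ε, h (ε + δ) * gaussDensity n Sig ε ≤ stdGaussianCDF (a + r) := by
  set I : (Fin n → ℝ) → ℝ :=
    Set.indicator {ε | -(δ ⬝ᵥ (Sig⁻¹ *ᵥ ε)) / r ≤ a} (fun _ => (1:ℝ)) with hI
  have hSm : MeasurableSet {ε : Fin n → ℝ | -(δ ⬝ᵥ (Sig⁻¹ *ᵥ ε)) / r ≤ a} :=
    measurableSet_le (Continuous.measurable (by fun_prop)) measurable_const
  have hIm : Measurable I := measurable_const.indicator hSm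
  have hI01 : ∀ v, I v ∈ Set.Icc (0:ℝ) 1 := by
    intro v
    simp only [hI, Set.indicator]
    split_ifs <;> simp
  have hIa : ∫ ε, I ε * gaussDensity n Sig ε = stdGaussianCDF a :=
    gd_halfspace n Sig hSig δ r hr hr2 a
  have hIr : ∫ ε, I (ε + δ) * gaussDensity n Sig ε = stdGaussianCDF (a + r) := by
    rw [← gd_halfspace n Sig hSig δ r hr hr2 (a + r)]
    congr 1
    ext ε
    congr 1
    simp only [hI, Set.indicator, Set.mem_ofPred_eq, Matrix.mulVec_add, dotProduct_add, hr2]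
    congr 1
    rw [div_le_iff₀ hr, div_le_iff₀ hr, eq_iff_iff]
    constructor <;> intro h <;> nlinarith
  have tr : ∀ h : (Fin n → ℝ) → ℝ, ∫ ε, h (ε + δ) * gaussDensity n Sig ε
      = ∫ ε, h ε * gaussDensity n Sig (ε - δ) := by
    intro h
    rw [← integral_add_right_eq_self (fun ε => h ε * gaussDensity n Sig (ε - δ)) δ]
    simp
  have trI : ∀ h : (Fin n → ℝ) → ℝ, Measurable h → (∀ v, h v ∈ Set.Icc (0:ℝ) 1) →
      Integrable (fun ε => h ε * gaussDensity n Sig (ε - δ)) := by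
    intro h hm h01
    have := (bdd_mul_gd n Sig hSig (fun ε => h (ε + δ)) (by fun_prop) (fun v => h01 _)).comp_sub_right δ
    simpa using this
  set k := Real.exp (-(r*a) - r^2/2) with hk
  have key : ∀ ε, h ε * gaussDensity n Sig (ε - δ) - k * (h ε * gaussDensity n Sig ε)
      ≤ I ε * gaussDensity n Sig (ε - δ) - k * (I ε * gaussDensity n Sig ε) := by
    intro ε
    have hs := gd_shift n Sig hSig δ ε 1
    rw [one_smul, hr2] at hs
    rw [hs]
    have hp := gd_nonneg n Sig ε
    obtain ⟨h0, h1⟩ := h01 ε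
    suffices H : 0 ≤ (I ε - h ε) *
      (Real.exp (1 * (δ ⬝ᵥ (Sig⁻¹ *ᵥ ε)) - 1^2 / 2 * r^2) - k) by
      nlinarith [mul_nonneg H hp]
    by_cases hε : -(δ ⬝ᵥ (Sig⁻¹ *ᵥ ε)) / r ≤ a
    · have : I ε = 1 := by simp [hI, Set.indicator, hε]
      rw [this]
      rw [div_le_iff₀ hr] at hε
      refine mul_nonneg (by linarith) (sub_nonneg.2 (Real.exp_le_exp.2 ?_))
      nlinarith
    · have : I ε = 0 := by simp [hI, Set.indicator, hε]
      rw [this]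
      rw [div_le_iff₀ hr] at hε
      refine mul_nonneg_of_nonpos_of_nonpos (by linarith) (sub_nonpos.2 (Real.exp_le_exp.2 ?_))
      nlinarith
  have i1 := trI h hm h01
  have i2 := (bdd_mul_gd n Sig hSig h hm h01).const_mul k
  have i3 := trI I hIm hI01
  have i4 := (bdd_mul_gd n Sig hSig I hIm hI01).const_mul k
  have := integral_mono (i1.sub i2) (i3.sub i4) key
  simp only [Pi.sub_apply] at this
  rw [integral_sub i1 i2, integral_sub i3 i4, integral_const_mul, integral_const_mul, ha, hIa,
    ← tr, ← tr, hIr] at this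
  linarith

lemma stdGaussianCDF_strictMono : StrictMono stdGaussianCDF := by
  intro a b hab
  unfold stdGaussianCDF
  have h1 : gaussianReal 0 1 (Set.Iic b)
      = gaussianReal 0 1 (Set.Iic a) + gaussianReal 0 1 (Set.Ioc a b) := by
    rw [← measure_union (Set.Iic_disjoint_Ioc le_rfl) measurableSet_Ioc,
      Set.Iic_union_Ioc_eq_Iic hab.le]
  have h2 : gaussianReal 0 1 (Set.Ioc a b) ≠ 0 := by
    intro h
    have := (gaussianReal_absolutelyContinuous' 0 (one_ne_zero)) h
    simp at this
    linarith
  rw [h1, ENNReal.toReal_add (measure_ne_top _ _) (measure_ne_top _ _)]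
  have := ENNReal.toReal_pos h2 (measure_ne_top _ _)
  linarith

/-- ellipsoid certificate for Gaussian-smoothed classifiers: the top
class `cA` is preserved for `δ` with
`√(δᵀΣ⁻¹δ) ≤ (1/2)(Φ⁻¹(g^{cA}(x)) − Φ⁻¹(max_{c ≠ cA} g^c(x)))`. -/
theorem gaussian_smoothing_ellipsoid_certificate (n K : ℕ)
    (Sig : Matrix (Fin n) (Fin n) ℝ) (hSig : Sig.PosDef)
    (f : (Fin n → ℝ) → Fin K → ℝ) (hf : Measurable f)
    (hf01 : ∀ v i, f v i ∈ Set.Icc (0:ℝ) 1)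
    (gS : (Fin n → ℝ) → Fin K → ℝ)
    (hgS : ∀ x i, gS x i = ∫ ε, f (x + ε) i * gaussDensity n Sig ε)
    (hg01 : ∀ x i, gS x i ∈ Set.Ioo (0:ℝ) 1)
    (Φinv : ℝ → ℝ)
    (hΦinv : ∀ p ∈ Set.Ioo (0:ℝ) 1, stdGaussianCDF (Φinv p) = p)
    (x : Fin n → ℝ) (cA : Fin K) (hcA : ∀ i, gS x i ≤ gS x cA)
    (hne : (Finset.univ.erase cA).Nonempty)
    (δ : Fin n → ℝ)
    (hδ : Real.sqrt (δ ⬝ᵥ (Sig⁻¹ *ᵥ δ)) ≤ (1 / 2) *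
      (Φinv (gS x cA) - Φinv ((Finset.univ.erase cA).sup' hne (fun c => gS x c)))) :
    ∀ c, c ≠ cA → gS (x + δ) c ≤ gS (x + δ) cA := by
  intro c hc
  have hQ : 0 ≤ δ ⬝ᵥ (Sig⁻¹ *ᵥ δ) := by
    simpa using hSig.inv.posSemidef.dotProduct_mulVec_nonneg δ
  by_cases hδ0 : δ = 0
  · subst hδ0
    simpa using hcA c
  have hQ' : 0 < δ ⬝ᵥ (Sig⁻¹ *ᵥ δ) := by
    simpa using hSig.inv.dotProduct_mulVec_pos hδ0
  set r := Real.sqrt (δ ⬝ᵥ (Sig⁻¹ *ᵥ δ)) with hrdef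
  have hr : 0 < r := Real.sqrt_pos.2 hQ'
  have hr2 : δ ⬝ᵥ (Sig⁻¹ *ᵥ δ) = r ^ 2 := (Real.sq_sqrt hQ).symm
  have step : ∀ (y d : Fin n → ℝ) (i : Fin K), d ⬝ᵥ (Sig⁻¹ *ᵥ d) = r ^ 2 →
      gS (y + d) i ≤ stdGaussianCDF (Φinv (gS y i) + r) := by
    intro y d i hd
    have := gd_np n Sig hSig d r hr hd (Φinv (gS y i)) (fun ε => f (y + ε) i)
      (by fun_prop) (fun v => hf01 _ _)
      (by rw [hΦinv _ (hg01 y i)]; exact (hgS y i).symm)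
    rw [hgS]
    refine le_trans (le_of_eq ?_) this
    simp only [add_assoc, add_comm d]
  have hA := step (x + δ) (-δ) cA (by simpa [Matrix.mulVec_neg] using hr2)
  rw [add_neg_cancel_right, ← hΦinv _ (hg01 x cA), stdGaussianCDF_strictMono.le_iff_le] at hA
  have hc' := step x δ c hr2
  set m := (Finset.univ.erase cA).sup' hne (fun c => gS x c) with hm
  have hcm : gS x c ≤ m :=
    Finset.le_sup' (fun c => gS x c) (Finset.mem_erase.2 ⟨hc, Finset.mem_univ c⟩)
  have hmm : m ∈ Set.Ioo (0:ℝ) 1 := by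
    obtain ⟨j, _, hj⟩ := Finset.exists_mem_eq_sup' hne (fun c => gS x c)
    rw [hm, hj]
    exact hg01 x j
  have hcm' : Φinv (gS x c) ≤ Φinv m := by
    rw [← stdGaussianCDF_strictMono.le_iff_le, hΦinv _ (hg01 x c), hΦinv _ hmm]
    exact hcm
  rw [← hΦinv _ (hg01 (x + δ) cA)]
  refine hc'.trans (stdGaussianCDF_strictMono.monotone ?_)
  linarith
end

section
/- Let Σ₁,…,Σ_K ∈ ℝ^{n×n} be positive definite, let α₁,…,α_K ∈ (0,1] with Σᵢ αᵢ = 1, and let f : ℝⁿ → [0,1] be measurable. Define the Gaussian-mixture smoothed function g_G(x) = Σᵢ αᵢ · E_{ε ~ N(0,Σᵢ)}[f(x + ε)], and set B⁻¹ = Σᵢ αᵢ Σᵢ⁻¹. Then g_G is √(π/2)-Lipschitz with respect to the norm ‖δ‖_{B,2} = √(δᵀB⁻¹δ); that is, |g_G(x + δ) − g_G(x)| ≤ √(π/2) · √(δᵀ(Σᵢ αᵢ Σᵢ⁻¹)δ) for all x, δ ∈ ℝⁿ. -/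
open MeasureTheory Matrix

open scoped MatrixOrder in
lemma exists_factor {n : ℕ} {Sig : Matrix (Fin n) (Fin n) ℝ} (h : Sig.PosDef) :
    ∃ B : Matrix (Fin n) (Fin n) ℝ, Sig⁻¹ = Bᵀ * B ∧ B.det ≠ 0 ∧
      Sig.det = (B.det ^ 2)⁻¹ ∧
      ∀ v : Fin n → ℝ, v ⬝ᵥ (Sig⁻¹ *ᵥ v) = ∑ i, (B *ᵥ v) i ^ 2 := by
  obtain ⟨B, hB⟩ := CStarAlgebra.nonneg_iff_eq_star_mul_self.mp h.inv.posSemidef.nonneg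
  have hB' : Sig⁻¹ = Bᵀ * B := by
    rw [hB, star_eq_conjTranspose, conjTranspose_eq_transpose_of_trivial]
  have hd : (Sig⁻¹).det = B.det ^ 2 := by rw [hB', det_mul, det_transpose, sq]
  have hpos := h.inv.det_pos
  refine ⟨B, hB', ?_, ?_, ?_⟩
  · intro h0
    rw [hd, h0] at hpos
    simp at hpos
  · rw [← hd, det_nonsing_inv, Ring.inverse_eq_inv', inv_inv]
  · intro v
    rw [hB', ← mulVec_mulVec, dotProduct_mulVec, vecMul_transpose]
    simp [dotProduct, sq]

lemma gauss_std_integrable (n : ℕ) :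
    Integrable (fun y : Fin n → ℝ => ∏ i, Real.exp (-(1/2) * y i ^ 2)) :=
  Integrable.fintype_prod (f := fun _ (t : ℝ) => Real.exp (-(1/2) * t ^ 2))
    (fun _ => integrable_exp_neg_mul_sq (by norm_num))

lemma gauss_std_integral (n : ℕ) :
    ∫ y : Fin n → ℝ, ∏ i, Real.exp (-(1/2) * y i ^ 2) = Real.sqrt (2 * Real.pi) ^ n := by
  rw [integral_fintype_prod_volume_eq_pow (fun t : ℝ => Real.exp (-(1/2) * t ^ 2)),
    integral_gaussian]
  simp [mul_comm]

lemma gaussDensity_eq {n : ℕ} {Sig B : Matrix (Fin n) (Fin n) ℝ}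
    (hq : ∀ v : Fin n → ℝ, v ⬝ᵥ (Sig⁻¹ *ᵥ v) = ∑ i, (B *ᵥ v) i ^ 2) (ε : Fin n → ℝ) :
    gaussDensity n Sig ε = (Real.sqrt ((2 * Real.pi) ^ n * Sig.det))⁻¹ *
      ∏ i, Real.exp (-(1/2) * (toLin' B ε) i ^ 2) := by
  rw [gaussDensity, hq, ← Real.exp_sum, ← Finset.mul_sum, toLin'_apply]
  congr 2
  ring

lemma gaussDensity_int {n : ℕ} {Sig : Matrix (Fin n) (Fin n) ℝ} (h : Sig.PosDef) :
    Integrable (gaussDensity n Sig) ∧ ∫ ε, gaussDensity n Sig ε = 1 := by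
  obtain ⟨B, -, hdet, hS, hq⟩ := exists_factor h
  have hmap := Real.map_matrix_volume_pi_eq_smul_volume_pi hdet
  have hmeas : Measurable (toLin' B : (Fin n → ℝ) → (Fin n → ℝ)) :=
    (LinearMap.continuous_of_finiteDimensional (toLin' B)).measurable
  have hi := gauss_std_integrable n
  have hi2 : Integrable (fun y : Fin n → ℝ => ∏ i, Real.exp (-(1/2) * y i ^ 2))
      (Measure.map (toLin' B) volume) := by
    rw [hmap]
    exact hi.smul_measure ENNReal.ofReal_ne_top
  have hi3 := hi2.comp_measurable hmeas
  have hfun : gaussDensity n Sig = fun ε => (Real.sqrt ((2 * Real.pi) ^ n * Sig.det))⁻¹ *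
      ∏ i, Real.exp (-(1/2) * (toLin' B ε) i ^ 2) := funext (gaussDensity_eq hq)
  constructor
  · rw [hfun]
    exact hi3.const_mul _
  · rw [hfun, integral_const_mul,
      ← integral_map (f := fun y : Fin n → ℝ => ∏ i, Real.exp (-(1/2) * y i ^ 2))
        hmeas.aemeasurable hi2.aestronglyMeasurable, hmap, integral_smul_measure,
      gauss_std_integral, ENNReal.toReal_ofReal (abs_nonneg _), hS, smul_eq_mul]
    have hp : (0:ℝ) < 2 * Real.pi := by positivity
    have e : Real.sqrt ((2 * Real.pi) ^ n * (B.det ^ 2)⁻¹)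
        = Real.sqrt (2 * Real.pi) ^ n * |B.det⁻¹| := by
      rw [Real.sqrt_eq_iff_mul_self_eq (by positivity) (by positivity)]
      have h1 : Real.sqrt (2 * Real.pi) ^ n * Real.sqrt (2 * Real.pi) ^ n = (2 * Real.pi) ^ n := by
        rw [← mul_pow, Real.mul_self_sqrt hp.le]
      have h2 : |B.det⁻¹| * |B.det⁻¹| = (B.det ^ 2)⁻¹ := by
        rw [abs_mul_abs_self, sq, mul_inv]
      rw [← h1, ← h2]
      ring
    rw [e]
    have h3 : |B.det⁻¹| ≠ 0 := by simpa using hdet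
    have h4 : Real.sqrt (2 * Real.pi) ^ n ≠ 0 := by positivity
    field_simp

lemma gauss_shift_mul {n : ℕ} {Sig : Matrix (Fin n) (Fin n) ℝ} (h : Sig.PosDef)
    (ε δ : Fin n → ℝ) :
    gaussDensity n Sig ε * gaussDensity n Sig (ε - δ) =
      (Real.exp (-(δ ⬝ᵥ (Sig⁻¹ *ᵥ δ)) / 8) *
        gaussDensity n Sig (ε - (1/2 : ℝ) • δ)) ^ 2 := by
  obtain ⟨B, -, -, -, hq⟩ := exists_factor h
  have key : ∑ i, (B *ᵥ ε) i ^ 2 + ∑ i, (B *ᵥ (ε - δ)) i ^ 2 =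
      2 * ∑ i, (B *ᵥ (ε - (1/2 : ℝ) • δ)) i ^ 2 + (∑ i, (B *ᵥ δ) i ^ 2) / 2 := by
    rw [Finset.mul_sum, Finset.sum_div, ← Finset.sum_add_distrib, ← Finset.sum_add_distrib]
    refine Finset.sum_congr rfl fun i _ => ?_
    simp only [mulVec_sub, mulVec_smul, Pi.sub_apply, Pi.smul_apply, smul_eq_mul]
    ring
  simp only [gaussDensity, hq]
  generalize (Real.sqrt ((2 * Real.pi) ^ n * Sig.det))⁻¹ = C
  rw [mul_pow, mul_pow, ← Real.exp_nat_mul, ← Real.exp_nat_mul]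
  rw [mul_mul_mul_comm, ← Real.exp_add, ← sq]
  rw [mul_left_comm, ← Real.exp_add]
  congr 2
  push_cast
  linarith

lemma pointwise {p q m s a : ℝ} (hp : 0 ≤ p) (hq : 0 ≤ q) (hm : 0 ≤ m) (hpq : p * q = m ^ 2)
    (hs : 0 < s) (ha : a ∈ Set.Icc (0:ℝ) 1) :
    |a * q - a * p| ≤ (p + q - 2 * m) / (2 * s) + s * (p + q) := by
  have h0 : |a * q - a * p| ≤ |q - p| := by
    rw [← mul_sub, abs_mul, abs_of_nonneg ha.1]
    exact mul_le_of_le_one_left (abs_nonneg _) ha.2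
  refine h0.trans ?_
  have hm2 : 2 * m ≤ p + q := le_of_abs_le
    (abs_le_of_sq_le_sq (by nlinarith [sq_nonneg (p - q)]) (by positivity))
  have hA : 0 ≤ p + q - 2 * m := by linarith
  have hB : p + q + 2 * m ≤ 2 * (p + q) := by linarith
  have e : (p + q - 2 * m) / (2 * s) + s * (p + q) =
      (p + q - 2 * m + 2 * s ^ 2 * (p + q)) / (2 * s) := by field_simp
  rw [e, le_div_iff₀ (by positivity)]
  refine le_of_abs_le (abs_le_of_sq_le_sq ?_ (by positivity))
  rw [mul_pow, sq_abs]
  have e2 : (q - p) ^ 2 = (p + q - 2 * m) * (p + q + 2 * m) := by linear_combination -4 * hpq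
  rw [e2]
  have := mul_le_mul_of_nonneg_left hB (mul_nonneg hA (sq_nonneg s))
  nlinarith [sq_nonneg (p + q - 2 * m - 2 * s ^ 2 * (p + q))]

lemma single {n : ℕ} {Sig : Matrix (Fin n) (Fin n) ℝ} (h : Sig.PosDef)
    (f : (Fin n → ℝ) → ℝ) (hf : Measurable f) (hf01 : ∀ v, f v ∈ Set.Icc (0:ℝ) 1)
    (x δ : Fin n → ℝ) :
    |(∫ ε, f (x + δ + ε) * gaussDensity n Sig ε) - ∫ ε, f (x + ε) * gaussDensity n Sig ε| ≤
      Real.sqrt (δ ⬝ᵥ (Sig⁻¹ *ᵥ δ)) := by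
  by_cases hδ : δ = 0
  · subst hδ
    simp
  obtain ⟨hI, h1⟩ := gaussDensity_int h
  set p := gaussDensity n Sig with hp
  set r2 := δ ⬝ᵥ (Sig⁻¹ *ᵥ δ) with hr2
  have hr2pos : 0 < r2 := by
    have := h.inv.dotProduct_mulVec_pos hδ
    simpa using this
  have hp0 : ∀ v, 0 ≤ p v := fun v => by rw [hp, gaussDensity]; positivity
  have hIs : ∀ d, Integrable (fun ε => p (ε - d)) := fun d => hI.comp_sub_right d
  have hint : ∀ d, ∫ ε, p (ε - d) = 1 := fun d => by
    rw [integral_sub_right_eq_self p d, h1]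
  have hsub : ∫ ε, f (x + δ + ε) * p ε = ∫ ε, f (x + ε) * p (ε - δ) := by
    rw [← integral_sub_right_eq_self (fun ε => f (x + δ + ε) * p ε) δ]
    congr 1
    ext ε
    congr 2
    abel
  have hfm : Measurable (fun ε => f (x + ε)) := hf.comp (measurable_const_add x)
  have hbd : ∀ d, Integrable (fun ε => f (x + ε) * p (ε - d)) := fun d => by
    refine (hIs d).bdd_mul (c := 1) hfm.aestronglyMeasurable (Filter.Eventually.of_forall fun v => ?_)
    rw [Real.norm_eq_abs, abs_of_nonneg (hf01 _).1]
    exact (hf01 _).2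
  have hbd0 : Integrable (fun ε => f (x + ε) * p ε) := by simpa using hbd 0
  rw [hsub, ← integral_sub (hbd δ) hbd0]
  set s := Real.sqrt r2 / 4 with hs
  have hspos : 0 < s := by positivity
  set c := Real.exp (-r2 / 8) with hc
  refine (abs_integral_le_integral_abs).trans ?_
  have hmono : ∫ ε, |f (x + ε) * p (ε - δ) - f (x + ε) * p ε| ≤
      ∫ ε, ((p ε + p (ε - δ) - 2 * (c * p (ε - (1/2 : ℝ) • δ))) / (2 * s)
        + s * (p ε + p (ε - δ))) := by
    refine integral_mono ((hbd δ).sub hbd0).abs ?_ fun ε => ?_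
    · exact ((((hI.add (hIs δ)).sub (((hIs _).const_mul c).const_mul 2)).div_const _).add
        ((hI.add (hIs δ)).const_mul s))
    · exact pointwise (hp0 _) (hp0 _) (mul_nonneg (Real.exp_pos _).le (hp0 _))
        (gauss_shift_mul h ε δ) hspos (hf01 _)
  refine hmono.trans ?_
  have hval : ∫ ε, ((p ε + p (ε - δ) - 2 * (c * p (ε - (1/2 : ℝ) • δ))) / (2 * s)
        + s * (p ε + p (ε - δ))) = (1 + 1 - 2 * (c * 1)) / (2 * s) + s * (1 + 1) := by
    rw [integral_add, integral_div, integral_sub, integral_add hI (hIs δ), integral_const_mul,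
      integral_const_mul, integral_const_mul, integral_add hI (hIs δ), hint, hint, h1]
    · exact hI.add (hIs δ)
    · exact ((hIs _).const_mul c).const_mul 2
    · exact (((hI.add (hIs δ)).sub (((hIs _).const_mul c).const_mul 2)).div_const _)
    · exact ((hI.add (hIs δ)).const_mul s)
  rw [hval]
  have hcl : 1 - r2 / 8 ≤ c := by
    have := Real.add_one_le_exp (-r2 / 8)
    rw [hc]; linarith
  have hr : r2 = 16 * s ^ 2 := by
    rw [hs, div_pow, Real.sq_sqrt hr2pos.le]; ring
  have h4 : Real.sqrt r2 = 4 * s := by rw [hs]; ring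
  rw [h4]
  have : (1 + 1 - 2 * (c * 1)) / (2 * s) ≤ 2 * s := by
    rw [div_le_iff₀ (by positivity)]
    nlinarith
  linarith

/-- the Gaussian-mixture smoothed function
`g_G(x) = Σᵢ αᵢ E_{ε ~ N(0,Σᵢ)}[f(x+ε)]` is `√(π/2)`-Lipschitz w.r.t.
`‖δ‖_{B,2} = √(δᵀB⁻¹δ)` where `B⁻¹ = Σᵢ αᵢ Σᵢ⁻¹`. -/
theorem gaussian_mixture_smoothing_lipschitz (n K : ℕ)
    (Sigs : Fin K → Matrix (Fin n) (Fin n) ℝ) (hSigs : ∀ i, (Sigs i).PosDef)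
    (α : Fin K → ℝ) (hα : ∀ i, α i ∈ Set.Ioc (0:ℝ) 1) (hsum : ∑ i, α i = 1)
    (f : (Fin n → ℝ) → ℝ) (hf : Measurable f) (hf01 : ∀ v, f v ∈ Set.Icc (0:ℝ) 1)
    (gG : (Fin n → ℝ) → ℝ)
    (hgG : ∀ x, gG x = ∑ i, α i * ∫ ε, f (x + ε) * gaussDensity n (Sigs i) ε) :
    ∀ (x δ : Fin n → ℝ), |gG (x + δ) - gG x| ≤
      Real.sqrt (Real.pi / 2) * Real.sqrt (δ ⬝ᵥ ((∑ i, α i • (Sigs i)⁻¹) *ᵥ δ)) := by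
  intro x δ
  set r : Fin K → ℝ := fun i => δ ⬝ᵥ ((Sigs i)⁻¹ *ᵥ δ) with hr
  have hr0 : ∀ i, 0 ≤ r i := fun i => by
    have := (hSigs i).inv.posSemidef.dotProduct_mulVec_nonneg δ
    simpa using this
  have hB : δ ⬝ᵥ ((∑ i, α i • (Sigs i)⁻¹) *ᵥ δ) = ∑ i, α i * r i := by
    rw [sum_mulVec, dotProduct_sum]
    refine Finset.sum_congr rfl fun i _ => ?_
    rw [smul_mulVec, dotProduct_smul, smul_eq_mul]
  have h1 : |gG (x + δ) - gG x| ≤ ∑ i, α i * Real.sqrt (r i) := by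
    rw [hgG, hgG, ← Finset.sum_sub_distrib]
    refine (Finset.abs_sum_le_sum_abs _ _).trans (Finset.sum_le_sum fun i _ => ?_)
    rw [← mul_sub, abs_mul, abs_of_pos (hα i).1]
    exact mul_le_mul_of_nonneg_left (single (hSigs i) f hf hf01 x δ) (hα i).1.le
  have h2 : ∑ i, α i * Real.sqrt (r i) ≤ Real.sqrt (∑ i, α i * r i) := by
    apply Real.le_sqrt_of_sq_le
    refine (Real.pow_arith_mean_le_arith_mean_pow Finset.univ α (fun i => Real.sqrt (r i))
      (fun i _ => (hα i).1.le) hsum (fun i _ => Real.sqrt_nonneg _) 2).trans (le_of_eq ?_)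
    exact Finset.sum_congr rfl fun i _ => by rw [Real.sq_sqrt (hr0 i)]
  have h3 : 1 ≤ Real.sqrt (Real.pi / 2) := by
    rw [Real.one_le_sqrt]
    linarith [Real.pi_gt_three]
  rw [hB]
  exact (h1.trans h2).trans (le_mul_of_one_le_left (Real.sqrt_nonneg _) h3)
end
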